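/- Let {Y_i : i ∈ ℕ*} be i.i.d. positive integer-valued random variables and {Ỹ_j : j ∈ ℕ*} an independent copy of this sequence; let Y have the common distribution. Let h be the largest positive integer such that the distribution of Y is supported on hℕ*. Define S_0 = S̃_0 = 0, S_n = Y_1 + ⋯ + Y_n, S̃_n = Ỹ_1 + ⋯ + Ỹ_n, and for i, j ∈ hℕ let L_{i,j} = inf{ℓ ≥ 1 : there exist m, n ≥ 0 with i + S_m = ℓ = j + S̃_n}. Let 1 ≤ r < ∞ be a real number and assume E(Y^{r+1}) < ∞. Then there exists a finite constant C such that for all i, j ∈ hℕ: E(L_{i,j}^r) ≤ C(1 + i^r + j^r). -/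

import Mathlib

open MeasureTheory ProbabilityTheory
open scoped ENNReal

noncomputable section

/-- The renewal process `S_m = Y_1 + ⋯ + Y_m` built from the increments `Y`. -/
def renewal {Ω : Type*} (Y : ℕ → Ω → ℕ) (m : ℕ) (ω : Ω) : ℕ := ∑ k ∈ Finset.range m, Y k ω

/-- `L_{i,j}`: the first common point at or above `1` of two delayed renewal processes with
delays `i`, `j` and increments `Y`, `Ỹ` (convention `sInf ∅ = 0`). -/
def firstCommonPoint {Ω : Type*} (Y Yt : ℕ → Ω → ℕ) (i j : ℕ) (ω : Ω) : ℕ :=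
  sInf {ℓ : ℕ | 1 ≤ ℓ ∧ (∃ m : ℕ, i + renewal Y m ω = ℓ) ∧ ∃ n : ℕ, j + renewal Yt n ω = ℓ}

/-!
After division by `h` the increment law `ν` is aperiodic. For a renewal process with law `ν`, the
overshoot `R` over any level satisfies `E(R^r) ≤ E(Y^(r+1)) =: C`, uniformly in the level. Hence the
overshoots are tight, and with aperiodicity this yields `δ > 0` and `n₁` such that every `n ≥ n₁` is
a renewal point with probability at least `δ`.

Run both delayed processes up to the level `t = max a b + n₁`. With probability at least `δ²` they
both visit `t`; otherwise they restart from `t + R` and `t + R'` with independent overshoots. If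
`‖L_{a,b}‖_r ≤ max a b + K` is known for all delays, Minkowski's inequality therefore improves the
bound to `max a b + n₁ + K (1 - δ²)^(1/r) + 2 C^(1/r)`, so the fixed point `K` of this affine
contraction is the natural candidate. It is indeed a valid constant: once `L^r` is truncated, the
excess of its expectation over `(max a b + K)^r` has a finite supremum, and the same restart
argument shrinks this supremum by the factor `1 - δ²`, so it vanishes.
-/

section Measure

variable {α : Type*} [MeasurableSpace α]

lemma lintegral_le_of_forall_lintegral_min_natCast_le {μ : Measure α} {f : α → ℝ≥0∞}
    (hf : Measurable f) {c : ℝ≥0∞} (h : ∀ N : ℕ, ∫⁻ x, min (f x) N ∂μ ≤ c) :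
    ∫⁻ x, f x ∂μ ≤ c := by
  have hsup (x : ℝ≥0∞) : ⨆ N : ℕ, min x N = x :=
    (inf_iSup_eq x _).symm.trans (by rw [ENNReal.iSup_natCast, inf_top_eq])
  have hmono : Monotone fun (N : ℕ) x ↦ min (f x) (N : ℝ≥0∞) :=
    fun M N hMN x ↦ min_le_min le_rfl (by exact_mod_cast hMN)
  calc ∫⁻ x, f x ∂μ = ∫⁻ x, ⨆ N : ℕ, min (f x) N ∂μ := by simp only [hsup]
    _ = ⨆ N : ℕ, ∫⁻ x, min (f x) N ∂μ :=
      lintegral_iSup (fun N ↦ hf.min measurable_const) hmono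
    _ ≤ c := iSup_le h

lemma lintegral_add_indicator_add_add_rpow_le {π : Measure α} [IsProbabilityMeasure π] {s : Set α}
    (hs : MeasurableSet s) {f g : α → ℝ≥0∞} (hf : Measurable f) (hg : Measurable g)
    {r : ℝ} (hr : 1 ≤ r) (t K : ℝ≥0∞) :
    ∫⁻ x, (t + s.indicator (fun _ ↦ K) x + f x + g x) ^ r ∂π ≤
      (t + K * π s ^ (1 / r) + (∫⁻ x, f x ^ r ∂π) ^ (1 / r)
        + (∫⁻ x, g x ^ r ∂π) ^ (1 / r)) ^ r := by
  have hr0 : 0 < r := by linarith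
  have hK : Measurable (s.indicator fun _ ↦ K) := measurable_const.indicator hs
  have hconst : (∫⁻ _, t ^ r ∂π) ^ (1 / r) = t := by
    rw [lintegral_const, measure_univ, mul_one, one_div, ENNReal.rpow_rpow_inv hr0.ne']
  have hindicator : (∫⁻ x, s.indicator (fun _ ↦ K) x ^ r ∂π) ^ (1 / r) = K * π s ^ (1 / r) := by
    have hpow (x : α) : s.indicator (fun _ ↦ K) x ^ r = s.indicator (fun _ ↦ K ^ r) x := by
      by_cases hx : x ∈ s <;> simp [hx, hr0]
    simp only [hpow]
    rw [lintegral_indicator_const hs, ENNReal.mul_rpow_of_nonneg _ _ (by positivity), one_div,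
      ENNReal.rpow_rpow_inv hr0.ne']
  rw [← ENNReal.rpow_inv_le_iff hr0, ← one_div]
  refine (ENNReal.lintegral_Lp_add_le (((measurable_const.add hK).add hf).aemeasurable)
    hg.aemeasurable hr).trans (add_le_add_left ?_ _)
  refine (ENNReal.lintegral_Lp_add_le ((measurable_const.add hK).aemeasurable)
    hf.aemeasurable hr).trans (add_le_add_left ?_ _)
  exact (ENNReal.lintegral_Lp_add_le aemeasurable_const hK.aemeasurable hr).trans_eq
    (by rw [hconst, hindicator])

end Measure

section ENNRealArithmetic

lemma exists_ne_top_add_mul_eq {A σ : ℝ≥0∞} (hA : A ≠ ⊤) (hσ : σ < 1) :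
    ∃ K ≠ ⊤, A + K * σ = K := by
  have hne : 1 - σ ≠ 0 := (tsub_pos_of_lt hσ).ne'
  obtain ⟨K, hK, hKA⟩ : ∃ K ≠ ⊤, K * (1 - σ) = A :=
    ⟨A / (1 - σ), ENNReal.div_ne_top hA hne,
      ENNReal.div_mul_cancel hne (ENNReal.sub_ne_top ENNReal.one_ne_top)⟩
  exact ⟨K, hK, by rw [← hKA, ← mul_add, tsub_add_cancel_of_le hσ.le, mul_one]⟩

lemma forall_le_of_forall_le_add_mul {ι : Type*} {g f : ι → ℝ≥0∞} {B ρ : ℝ≥0∞} (hB : B ≠ ⊤)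
    (hρ : ρ < 1) (hgB : ∀ i, g i ≤ B)
    (hstep : ∀ ε, (∀ i, g i ≤ f i + ε) → ∀ i, g i ≤ f i + ε * ρ) (i : ι) : g i ≤ f i := by
  set ε := ⨆ i, g i - f i
  have hεtop : ε ≠ ⊤ := ne_top_of_le_ne_top hB (iSup_le fun i ↦ tsub_le_self.trans (hgB i))
  have hgε (i : ι) : g i ≤ f i + ε := tsub_le_iff_left.1 (le_iSup (fun i ↦ g i - f i) i)
  have hερ : ε ≤ ε * ρ := iSup_le fun i ↦ tsub_le_iff_left.2 (hstep ε hgε i)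
  have hε0 : ε = 0 := by
    by_contra hne
    exact (ENNReal.mul_lt_mul_right hne hεtop hρ).not_ge (by simpa using hερ)
  simpa [hε0] using hgε i

end ENNRealArithmetic

section ResidualLife

/-- The transition kernel of the residual-life chain of a renewal process on `ℕ` with increment
law `ν`: from `k + 1` the residual life drops to `k`, and from `0`, where a renewal occurs, it
becomes `y - 1` for a fresh increment `y` of law `ν`. -/
def residualKernel (ν : Measure ℕ) : Kernel ℕ ℕ :=
  Kernel.ofFunOfCountable fun
    | 0 => ν.map Nat.pred
    | k + 1 => Measure.dirac k

/-- The law of the overshoot over level `d` of a renewal process started at `0` with increment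
law `ν`, that is, of the distance from `d` to the first renewal point at or above `d`. -/
def overshoot (ν : Measure ℕ) (d : ℕ) : Measure ℕ := (residualKernel ν ^ d) 0

lemma residualKernel_zero (ν : Measure ℕ) : residualKernel ν 0 = ν.map Nat.pred := rfl

lemma residualKernel_succ (ν : Measure ℕ) (k : ℕ) :
    residualKernel ν (k + 1) = Measure.dirac k := rfl

lemma lintegral_residualKernel_zero (ν : Measure ℕ) (f : ℕ → ℝ≥0∞) :
    ∫⁻ k, f k ∂residualKernel ν 0 = ∫⁻ y, f (y - 1) ∂ν :=
  lintegral_map (measurable_of_countable f) (measurable_of_countable _)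

lemma lintegral_residualKernel_succ (ν : Measure ℕ) (f : ℕ → ℝ≥0∞) (k : ℕ) :
    ∫⁻ l, f l ∂residualKernel ν (k + 1) = f k :=
  lintegral_dirac k f

lemma overshoot_zero (ν : Measure ℕ) : overshoot ν 0 = Measure.dirac 0 := by
  rw [overshoot, pow_zero]; rfl

lemma lintegral_overshoot_zero (ν : Measure ℕ) (f : ℕ → ℝ≥0∞) :
    ∫⁻ k, f k ∂overshoot ν 0 = f 0 := by
  rw [overshoot_zero, lintegral_dirac]

lemma lintegral_overshoot_succ (ν : Measure ℕ) (d : ℕ) (f : ℕ → ℝ≥0∞) :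
    ∫⁻ k, f k ∂overshoot ν (d + 1) = ∫⁻ k, ∫⁻ l, f l ∂residualKernel ν k ∂overshoot ν d := by
  rw [overshoot, add_comm, Kernel.pow_add, pow_one,
    Kernel.lintegral_comp _ _ _ (measurable_of_countable f), overshoot]

lemma residualKernel_pow_add_apply (ν : Measure ℕ) (d k : ℕ) :
    (residualKernel ν ^ d) (d + k) = Measure.dirac k := by
  induction d with
  | zero => rw [pow_zero, zero_add]; rfl
  | succ d ih =>
    rw [Kernel.pow_add, pow_one, Kernel.comp_apply, Nat.add_right_comm, residualKernel_succ,
      Measure.dirac_bind (Kernel.measurable _), ih]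

lemma residualKernel_pow_add_self (ν : Measure ℕ) (d k : ℕ) :
    (residualKernel ν ^ (d + k)) k = overshoot ν d := by
  have hk : (residualKernel ν ^ k) k = Measure.dirac 0 := residualKernel_pow_add_apply ν k 0
  rw [Kernel.pow_add, Kernel.comp_apply, hk, Measure.dirac_bind (Kernel.measurable _), overshoot]

instance (ν : Measure ℕ) [IsProbabilityMeasure ν] : IsMarkovKernel (residualKernel ν) where
  isProbabilityMeasure
    | 0 => Measure.isProbabilityMeasure_map (measurable_of_countable _).aemeasurable
    | k + 1 => Measure.dirac.isProbabilityMeasure (x := k)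

instance (ν : Measure ℕ) [IsProbabilityMeasure ν] (d : ℕ) :
    IsProbabilityMeasure (overshoot ν d) where
  measure_univ := by
    rw [← lintegral_one]
    induction d with
    | zero => exact lintegral_overshoot_zero ν 1
    | succ d ih =>
      rw [lintegral_overshoot_succ]
      simpa using ih

lemma le_lintegral_overshoot {ν : Measure ℕ} (hν : ν {0} = 0) {g : ℕ → ℝ≥0∞}
    (hg : ∀ a, g a ≤ ∫⁻ y, g (a + y) ∂ν) (d a : ℕ) :
    g a ≤ ∫⁻ k, g (a + d + k) ∂overshoot ν d := by
  have hpos : ∀ᵐ y ∂ν, y ≠ 0 := measure_eq_zero_iff_ae_notMem.1 hν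
  induction d with
  | zero => rw [lintegral_overshoot_zero, add_zero, add_zero]
  | succ d ih =>
    rw [lintegral_overshoot_succ]
    refine ih.trans (lintegral_mono fun k ↦ ?_)
    cases k with
    | zero =>
      rw [lintegral_residualKernel_zero]
      refine (hg _).trans (lintegral_mono_ae ?_)
      filter_upwards [hpos] with y hy
      rw [show a + d + 0 + y = a + (d + 1) + (y - 1) by omega]
    | succ k =>
      rw [lintegral_residualKernel_succ, show a + d + (k + 1) = a + (d + 1) + k by omega]

lemma lintegral_overshoot_le {ν : Measure ℕ} [IsProbabilityMeasure ν] (hν : ν {0} = 0)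
    (f : ℕ → ℝ≥0∞) (d : ℕ) :
    ∫⁻ k, f k ∂overshoot ν d ≤ f 0 + ∫⁻ y, ∑ k ∈ Finset.range y, f k ∂ν := by
  have hpos : ∀ᵐ y ∂ν, y ≠ 0 := measure_eq_zero_iff_ae_notMem.1 hν
  induction d generalizing f with
  | zero => exact (lintegral_overshoot_zero ν f).trans_le le_self_add
  | succ d ih =>
    let f' : ℕ → ℝ≥0∞ := fun
      | 0 => 0
      | k + 1 => f k
    have hsplit (k : ℕ) :
        ∫⁻ l, f l ∂residualKernel ν k ≤ ∫⁻ y, f (y - 1) ∂ν + f' k := by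
      cases k with
      | zero => exact (lintegral_residualKernel_zero ν f).trans_le le_self_add
      | succ k => exact (lintegral_residualKernel_succ ν f k).trans_le le_add_self
    calc ∫⁻ k, f k ∂overshoot ν (d + 1)
        = ∫⁻ k, ∫⁻ l, f l ∂residualKernel ν k ∂overshoot ν d := lintegral_overshoot_succ ν d f
      _ ≤ ∫⁻ k, (∫⁻ y, f (y - 1) ∂ν + f' k) ∂overshoot ν d := lintegral_mono hsplit
      _ = ∫⁻ y, f (y - 1) ∂ν + ∫⁻ k, f' k ∂overshoot ν d := by
        rw [lintegral_add_left measurable_const, lintegral_const, measure_univ, mul_one]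
      _ ≤ ∫⁻ y, f (y - 1) ∂ν + ∫⁻ y, ∑ k ∈ Finset.range y, f' k ∂ν := by
        grw [ih f', zero_add]
      _ = ∫⁻ y, ∑ k ∈ Finset.range y, f k ∂ν := by
        rw [← lintegral_add_left (measurable_of_countable _)]
        refine lintegral_congr_ae ?_
        filter_upwards [hpos] with y hy
        obtain ⟨n, rfl⟩ := Nat.exists_eq_succ_of_ne_zero hy
        rw [Finset.sum_range_succ', Finset.sum_range_succ, Nat.succ_sub_one, add_comm, add_zero]
      _ ≤ _ := le_add_self

lemma lintegral_rpow_overshoot_le {ν : Measure ℕ} [IsProbabilityMeasure ν] (hν : ν {0} = 0)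
    {r : ℝ} (hr : 0 < r) (d : ℕ) :
    ∫⁻ k, (k : ℝ≥0∞) ^ r ∂overshoot ν d ≤ ∫⁻ y, (y : ℝ≥0∞) ^ (r + 1) ∂ν := by
  have hsum (y : ℕ) : ∑ k ∈ Finset.range y, (k : ℝ≥0∞) ^ r ≤ (y : ℝ≥0∞) ^ (r + 1) :=
    calc ∑ k ∈ Finset.range y, (k : ℝ≥0∞) ^ r
        ≤ ∑ _k ∈ Finset.range y, (y : ℝ≥0∞) ^ r := by
          refine Finset.sum_le_sum fun k hk ↦ ?_
          have : k ≤ y := (Finset.mem_range.1 hk).le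
          gcongr
      _ = (y : ℝ≥0∞) ^ (r + 1) := by
        rw [Finset.sum_const, Finset.card_range, nsmul_eq_mul,
          ENNReal.rpow_add_of_nonneg _ _ hr.le zero_le_one, ENNReal.rpow_one, mul_comm]
  calc ∫⁻ k, (k : ℝ≥0∞) ^ r ∂overshoot ν d
      ≤ ((0 : ℕ) : ℝ≥0∞) ^ r + ∫⁻ y, ∑ k ∈ Finset.range y, (k : ℝ≥0∞) ^ r ∂ν :=
        lintegral_overshoot_le hν (fun k ↦ (k : ℝ≥0∞) ^ r) d
    _ = ∫⁻ y, ∑ k ∈ Finset.range y, (k : ℝ≥0∞) ^ r ∂ν := by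
      rw [Nat.cast_zero, ENNReal.zero_rpow_of_pos hr, zero_add]
    _ ≤ ∫⁻ y, (y : ℝ≥0∞) ^ (r + 1) ∂ν := lintegral_mono hsum

lemma exists_forall_le_overshoot_Iio {ν : Measure ℕ} [IsProbabilityMeasure ν] (hν : ν {0} = 0)
    {r : ℝ} (hr : 0 < r) (hmom : ∫⁻ y, (y : ℝ≥0∞) ^ (r + 1) ∂ν ≠ ⊤) :
    ∃ M : ℕ, ∀ d, 2⁻¹ ≤ overshoot ν d (Set.Iio M) := by
  set C := ∫⁻ y, (y : ℝ≥0∞) ^ (r + 1) ∂ν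
  obtain ⟨M, hM⟩ : ∃ M : ℕ, (C / 2⁻¹) ^ r⁻¹ < M :=
    ENNReal.exists_nat_gt (ENNReal.rpow_ne_top_of_nonneg (by positivity)
      (ENNReal.div_ne_top hmom (by simp)))
  have hM0 : (M : ℝ≥0∞) ^ r ≠ 0 := by
    simp [hr, (zero_le.trans_lt hM).ne']
  have hCM : C ≤ 2⁻¹ * (M : ℝ≥0∞) ^ r := by
    rw [mul_comm, ← ENNReal.div_le_iff (by simp) (by simp)]
    exact (ENNReal.rpow_inv_le_iff hr).1 hM.le
  refine ⟨M, fun d ↦ ?_⟩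
  have htail : overshoot ν d (Set.Ici M) ≤ 2⁻¹ :=
    calc overshoot ν d (Set.Ici M)
        ≤ overshoot ν d {k : ℕ | (M : ℝ≥0∞) ^ r ≤ (k : ℝ≥0∞) ^ r} :=
          measure_mono fun k (hk : M ≤ k) ↦
            ENNReal.rpow_le_rpow (by exact_mod_cast hk) hr.le
      _ ≤ (∫⁻ k, (k : ℝ≥0∞) ^ r ∂overshoot ν d) / (M : ℝ≥0∞) ^ r :=
        meas_ge_le_lintegral_div (measurable_of_countable _).aemeasurable hM0 (by finiteness)
      _ ≤ C / (M : ℝ≥0∞) ^ r := by gcongr; exact lintegral_rpow_overshoot_le hν hr d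
      _ ≤ 2⁻¹ := ENNReal.div_le_of_le_mul hCM
  rw [← Set.compl_Ici, prob_compl_eq_one_sub measurableSet_Ici]
  exact ENNReal.one_sub_inv_two.ge.trans (tsub_le_tsub_left htail 1)

lemma mul_overshoot_le_overshoot_add {ν : Measure ℕ} {e : ℕ} {s : Set ℕ} {c : ℝ≥0∞}
    (h : ∀ k ∈ s, c ≤ (residualKernel ν ^ e) k {0}) (d : ℕ) :
    c * overshoot ν d s ≤ overshoot ν (d + e) {0} :=
  calc c * overshoot ν d s = ∫⁻ _ in s, c ∂overshoot ν d := (setLIntegral_const s c).symm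
    _ ≤ ∫⁻ k in s, (residualKernel ν ^ e) k {0} ∂overshoot ν d :=
      setLIntegral_mono (measurable_of_countable _) h
    _ ≤ ∫⁻ k, (residualKernel ν ^ e) k {0} ∂overshoot ν d := setLIntegral_le_lintegral _ _
    _ = overshoot ν (d + e) {0} :=
      (Kernel.pow_add_apply_eq_lintegral _ d e 0 (measurableSet_singleton 0)).symm

lemma overshoot_singleton_zero_mul_le (ν : Measure ℕ) (d e : ℕ) :
    overshoot ν e {0} * overshoot ν d {0} ≤ overshoot ν (d + e) {0} :=
  mul_overshoot_le_overshoot_add (by rintro _ rfl; rfl) d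

lemma measure_singleton_succ_le_overshoot (ν : Measure ℕ) (k : ℕ) :
    ν {k + 1} ≤ overshoot ν (k + 1) {0} := by
  have hk : ∀ l ∈ ({k} : Set ℕ), 1 ≤ (residualKernel ν ^ k) l {0} := by
    rintro l rfl
    have hdirac : (residualKernel ν ^ l) l = Measure.dirac 0 :=
      residualKernel_pow_add_apply ν l 0
    rw [hdirac, Measure.dirac_apply_of_mem (Set.mem_singleton 0)]
  calc ν {k + 1} ≤ overshoot ν 1 {k} := by
        rw [overshoot, pow_one, residualKernel_zero,
          Measure.map_apply (measurable_of_countable _) (measurableSet_singleton k)]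
        exact measure_mono (by rintro _ rfl; rfl)
    _ = 1 * overshoot ν 1 {k} := (one_mul _).symm
    _ ≤ overshoot ν (k + 1) {0} := add_comm k 1 ▸ mul_overshoot_le_overshoot_add hk 1

lemma exists_forall_ge_overshoot_singleton_zero_ne_zero {ν : Measure ℕ}
    (hgcd : ∀ q : ℕ, (∀ᵐ y ∂ν, q ∣ y) → q = 1) :
    ∃ n₀, ∀ n ≥ n₀, overshoot ν n {0} ≠ 0 := by
  let S : AddSubmonoid ℕ :=
    { carrier := {n | overshoot ν n {0} ≠ 0}
      zero_mem' := by simp [overshoot_zero]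
      add_mem' := fun {d e} hd he ↦
        ne_bot_of_le_ne_bot (mul_ne_zero he hd) (overshoot_singleton_zero_mul_le ν d e) }
  have hsupport {y : ℕ} (hy : ν {y} ≠ 0) : y ∈ S := by
    cases y with
    | zero => exact S.zero_mem
    | succ k => exact ne_bot_of_le_ne_bot hy (measure_singleton_succ_le_overshoot ν k)
  have hgcdS : Nat.setGcd (S : Set ℕ) = 1 := hgcd _ <| ae_iff_of_countable.2 fun y hy ↦
    Nat.setGcd_dvd_of_mem (hsupport hy)
  obtain ⟨n₀, hn₀⟩ := Nat.exists_mem_closure_of_ge (S : Set ℕ)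
  refine ⟨n₀, fun n hn ↦ ?_⟩
  have hmem : n ∈ AddSubmonoid.closure (S : Set ℕ) := hn₀ n hn (hgcdS ▸ one_dvd n)
  rwa [AddSubmonoid.closure_eq] at hmem

lemma exists_forall_ge_le_overshoot_singleton_zero {ν : Measure ℕ} [IsProbabilityMeasure ν]
    (hν : ν {0} = 0) (hgcd : ∀ q : ℕ, (∀ᵐ y ∂ν, q ∣ y) → q = 1)
    {r : ℝ} (hr : 0 < r) (hmom : ∫⁻ y, (y : ℝ≥0∞) ^ (r + 1) ∂ν ≠ ⊤) :
    ∃ δ ≠ 0, ∃ n₁ ≥ 1, ∀ n ≥ n₁, δ ≤ overshoot ν n {0} := by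
  obtain ⟨M, hM⟩ := exists_forall_le_overshoot_Iio hν hr hmom
  obtain ⟨n₀, hn₀⟩ := exists_forall_ge_overshoot_singleton_zero_ne_zero hgcd
  -- If the overshoot over the level `n - (n₀ + M)` is `k < M`, then `n₀ + M - k ≥ n₀` steps remain.
  set c := (Finset.range (M + 1)).inf fun k ↦ overshoot ν (n₀ + k) {0}
  have hc : 0 < c := (Finset.lt_inf_iff ENNReal.zero_lt_top).2 fun k _ ↦
    pos_iff_ne_zero.2 (hn₀ _ (Nat.le_add_right n₀ k))
  have hck : ∀ k ∈ Set.Iio M, c ≤ (residualKernel ν ^ (n₀ + M)) k {0} := by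
    intro k hk
    have hkM : k ≤ M := le_of_lt hk
    rw [show n₀ + M = n₀ + (M - k) + k by omega, residualKernel_pow_add_self]
    exact Finset.inf_le (Finset.mem_range.2 (by omega))
  refine ⟨c * 2⁻¹, by simp [hc.ne'], n₀ + M + 1, by omega, fun n hn ↦ ?_⟩
  calc c * 2⁻¹ ≤ c * overshoot ν (n - (n₀ + M)) (Set.Iio M) := by gcongr; exact hM _
    _ ≤ overshoot ν (n - (n₀ + M) + (n₀ + M)) {0} := mul_overshoot_le_overshoot_add hck _
    _ = overshoot ν n {0} := by rw [Nat.sub_add_cancel (by omega)]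

end ResidualLife

section Contraction

/-- Subharmonicity for a pair of independent walks on `ℕ` with increment law `ν`: advancing either
coordinate by a fresh increment does not decrease the expected value of `g`. -/
structure IsBisubharmonic (ν : Measure ℕ) (g : ℕ → ℕ → ℝ≥0∞) : Prop where
  left : ∀ a b, g a b ≤ ∫⁻ y, g (a + y) b ∂ν
  right : ∀ a b, g a b ≤ ∫⁻ y, g a (b + y) ∂ν

lemma le_rpow_indicator_add_indicator {g : ℕ → ℕ → ℝ≥0∞} {r : ℝ} {K ε : ℝ≥0∞}
    (hr : 0 ≤ r) (hdiag : ∀ a ≥ 1, g a a ≤ (a : ℝ≥0∞) ^ r)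
    (hε : ∀ a b, g a b ≤ (↑(max a b) + K) ^ r + ε) {t : ℕ} (ht : 1 ≤ t) (z : ℕ × ℕ) :
    g (t + z.1) (t + z.2) ≤ (t + ({0}ᶜ : Set (ℕ × ℕ)).indicator (fun _ ↦ K) z + z.1 + z.2) ^ r
      + ({0}ᶜ : Set (ℕ × ℕ)).indicator (fun _ ↦ ε) z := by
  by_cases hz : z = 0
  · simpa [hz] using hdiag t ht
  · have hmax : ((max (t + z.1) (t + z.2) : ℕ) : ℝ≥0∞) ≤ t + z.1 + z.2 := by
      exact_mod_cast (by omega : max (t + z.1) (t + z.2) ≤ t + z.1 + z.2)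
    rw [Set.indicator_of_mem hz, Set.indicator_of_mem hz,
      show (t : ℝ≥0∞) + K + z.1 + z.2 = t + z.1 + z.2 + K by ring]
    grw [hε, hmax]

variable {ν : Measure ℕ} {g : ℕ → ℕ → ℝ≥0∞}

lemma IsBisubharmonic.le_lintegral_prod_overshoot (hg : IsBisubharmonic ν g) (hν : ν {0} = 0)
    (d e a b : ℕ) :
    g a b ≤ ∫⁻ z, g (a + d + z.1) (b + e + z.2) ∂(overshoot ν d).prod (overshoot ν e) :=
  calc g a b ≤ ∫⁻ k, g (a + d + k) b ∂overshoot ν d :=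
      le_lintegral_overshoot hν (g := fun a ↦ g a b) (fun a ↦ hg.left a b) d a
    _ ≤ ∫⁻ k, ∫⁻ l, g (a + d + k) (b + e + l) ∂overshoot ν e ∂overshoot ν d :=
      lintegral_mono fun k ↦ le_lintegral_overshoot hν (hg.right (a + d + k)) e b
    _ = ∫⁻ z, g (a + d + z.1) (b + e + z.2) ∂(overshoot ν d).prod (overshoot ν e) :=
      (lintegral_prod (fun z : ℕ × ℕ ↦ g (a + d + z.1) (b + e + z.2))
        (measurable_of_countable _).aemeasurable).symm

variable [IsProbabilityMeasure ν]

lemma prod_overshoot_compl_singleton_zero_le {δ : ℝ≥0∞} {d e : ℕ} (hd : δ ≤ overshoot ν d {0})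
    (he : δ ≤ overshoot ν e {0}) :
    (overshoot ν d).prod (overshoot ν e) {0}ᶜ ≤ 1 - δ * δ := by
  rw [prob_compl_eq_one_sub (measurableSet_singleton _), ← Prod.mk_zero_zero,
    ← Set.singleton_prod_singleton, Measure.prod_prod]
  gcongr

lemma IsBisubharmonic.le_rpow_add_mul (hg : IsBisubharmonic ν g) (hν : ν {0} = 0)
    {r : ℝ} (hr : 1 ≤ r) (hdiag : ∀ a ≥ 1, g a a ≤ (a : ℝ≥0∞) ^ r)
    {δ : ℝ≥0∞} {n₁ : ℕ} (hn₁ : 1 ≤ n₁) (hδ : ∀ n ≥ n₁, δ ≤ overshoot ν n {0}) {K : ℝ≥0∞}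
    (hK : n₁ + (∫⁻ y, (y : ℝ≥0∞) ^ (r + 1) ∂ν) ^ (1 / r)
      + (∫⁻ y, (y : ℝ≥0∞) ^ (r + 1) ∂ν) ^ (1 / r) + K * (1 - δ * δ) ^ (1 / r) = K)
    {ε : ℝ≥0∞} (hε : ∀ a b, g a b ≤ (↑(max a b) + K) ^ r + ε) (a b : ℕ) :
    g a b ≤ (↑(max a b) + K) ^ r + ε * (1 - δ * δ) := by
  have hr0 : 0 < r := by linarith
  set C := ∫⁻ y, (y : ℝ≥0∞) ^ (r + 1) ∂ν
  set t := max a b + n₁ with ht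
  set π := (overshoot ν (t - a)).prod (overshoot ν (t - b))
  have hπ : π {0}ᶜ ≤ 1 - δ * δ :=
    prod_overshoot_compl_singleton_zero_le (hδ _ (by omega)) (hδ _ (by omega))
  have hmom₁ : ∫⁻ z, (z.1 : ℝ≥0∞) ^ r ∂π ≤ C := by
    rw [measurePreserving_fst.lintegral_comp (f := fun k : ℕ ↦ (k : ℝ≥0∞) ^ r)
      (measurable_of_countable _)]
    exact lintegral_rpow_overshoot_le hν hr0 _
  have hmom₂ : ∫⁻ z, (z.2 : ℝ≥0∞) ^ r ∂π ≤ C := by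
    rw [measurePreserving_snd.lintegral_comp (f := fun k : ℕ ↦ (k : ℝ≥0∞) ^ r)
      (measurable_of_countable _)]
    exact lintegral_rpow_overshoot_le hν hr0 _
  calc g a b ≤ ∫⁻ z, g (t + z.1) (t + z.2) ∂π := by
        simpa only [Nat.add_sub_cancel' (show a ≤ t by omega),
          Nat.add_sub_cancel' (show b ≤ t by omega)]
          using hg.le_lintegral_prod_overshoot hν (t - a) (t - b) a b
    _ ≤ ∫⁻ z, (t + ({0}ᶜ : Set (ℕ × ℕ)).indicator (fun _ ↦ K) z + z.1 + z.2) ^ r ∂π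
        + ε * π {0}ᶜ := by
      rw [← lintegral_indicator_const (measurableSet_singleton _).compl,
        ← lintegral_add_left (measurable_of_countable _)]
      exact lintegral_mono fun z ↦ le_rpow_indicator_add_indicator hr0.le hdiag hε (by omega) z
    _ ≤ (t + K * π {0}ᶜ ^ (1 / r) + (∫⁻ z, (z.1 : ℝ≥0∞) ^ r ∂π) ^ (1 / r)
        + (∫⁻ z, (z.2 : ℝ≥0∞) ^ r ∂π) ^ (1 / r)) ^ r + ε * π {0}ᶜ := by
      gcongr
      exact lintegral_add_indicator_add_add_rpow_le (measurableSet_singleton _).compl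
        (measurable_of_countable _) (measurable_of_countable _) hr t K
    _ ≤ (t + K * (1 - δ * δ) ^ (1 / r) + C ^ (1 / r) + C ^ (1 / r)) ^ r
        + ε * (1 - δ * δ) := by gcongr
    _ = (↑(max a b) + K) ^ r + ε * (1 - δ * δ) := by
      conv_rhs => rw [← hK]
      rw [ht]; push_cast; ring_nf

theorem exists_forall_isBisubharmonic_le_rpow (hν : ν {0} = 0)
    (hgcd : ∀ q : ℕ, (∀ᵐ y ∂ν, q ∣ y) → q = 1) {r : ℝ} (hr : 1 ≤ r)
    (hmom : ∫⁻ y, (y : ℝ≥0∞) ^ (r + 1) ∂ν ≠ ⊤) :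
    ∃ K ≠ (⊤ : ℝ≥0∞), ∀ g, IsBisubharmonic ν g → (∀ a ≥ 1, g a a ≤ (a : ℝ≥0∞) ^ r) →
      (∃ B ≠ ⊤, ∀ a b, g a b ≤ B) → ∀ a b, g a b ≤ (↑(max a b) + K) ^ r := by
  have hr0 : 0 < r := by linarith
  obtain ⟨δ, hδ0, n₁, hn₁, hδ⟩ := exists_forall_ge_le_overshoot_singleton_zero hν hgcd hr0 hmom
  have hρ : 1 - δ * δ < 1 :=
    ENNReal.sub_lt_self ENNReal.one_ne_top one_ne_zero (mul_ne_zero hδ0 hδ0)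
  obtain ⟨K, hKtop, hK⟩ := exists_ne_top_add_mul_eq
    (A := n₁ + (∫⁻ y, (y : ℝ≥0∞) ^ (r + 1) ∂ν) ^ (1 / r)
      + (∫⁻ y, (y : ℝ≥0∞) ^ (r + 1) ∂ν) ^ (1 / r)) (by finiteness)
    (ENNReal.rpow_lt_one hρ (by positivity : 0 < 1 / r))
  refine ⟨K, hKtop, fun g hg hdiag ⟨B, hB, hgB⟩ a b ↦ ?_⟩
  refine forall_le_of_forall_le_add_mul (g := fun p : ℕ × ℕ ↦ g p.1 p.2)
    (f := fun p ↦ (↑(max p.1 p.2) + K) ^ r) hB hρ (fun p ↦ hgB _ _) (fun ε hε p ↦ ?_) (a, b)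
  exact hg.le_rpow_add_mul hν hr hdiag hn₁ hδ hK (fun a b ↦ hε (a, b)) p.1 p.2

end Contraction

section FirstCommonPoint

/-- The first common point at or above `1` of the renewal sequences with delays `a`, `b` and
increments `w (.inl k)`, `w (.inr k)`, with value `⊤` when there is none. Unlike
`firstCommonPoint`, which is `0` in that case, it does not decrease when a sequence is advanced by
one renewal. -/
def extFirstCommonPoint (w : ℕ ⊕ ℕ → ℕ) (a b : ℕ) : ℝ≥0∞ :=
  ⨅ ℓ ∈ {ℓ : ℕ | 1 ≤ ℓ ∧ (∃ m, a + ∑ k ∈ Finset.range m, w (.inl k) = ℓ) ∧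
    ∃ n, b + ∑ k ∈ Finset.range n, w (.inr k) = ℓ}, (ℓ : ℝ≥0∞)

lemma extFirstCommonPoint_le_shift_left (w : ℕ ⊕ ℕ → ℕ) (a b : ℕ) :
    extFirstCommonPoint w a b ≤
      extFirstCommonPoint (fun i ↦ w (i.map Nat.succ id)) (a + w (.inl 0)) b := by
  refine biInf_mono fun ℓ ⟨hℓ, ⟨m, hm⟩, hb⟩ ↦ ⟨hℓ, ⟨m + 1, ?_⟩, hb⟩
  rw [Finset.sum_range_succ', ← hm, add_assoc, add_comm (w _)]
  rfl

lemma extFirstCommonPoint_le_shift_right (w : ℕ ⊕ ℕ → ℕ) (a b : ℕ) :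
    extFirstCommonPoint w a b ≤
      extFirstCommonPoint (fun i ↦ w (i.map id Nat.succ)) a (b + w (.inr 0)) := by
  refine biInf_mono fun ℓ ⟨hℓ, ha, ⟨n, hn⟩⟩ ↦ ⟨hℓ, ha, ⟨n + 1, ?_⟩⟩
  rw [Finset.sum_range_succ', ← hn, add_assoc, add_comm (w _)]
  rfl

lemma extFirstCommonPoint_self_le (w : ℕ ⊕ ℕ → ℕ) {a : ℕ} (ha : 1 ≤ a) :
    extFirstCommonPoint w a a ≤ a :=
  biInf_le _ ⟨ha, ⟨0, by simp⟩, ⟨0, by simp⟩⟩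

lemma measurable_extFirstCommonPoint (a b : ℕ) :
    Measurable fun w ↦ extFirstCommonPoint w a b := by
  classical
  simp only [extFirstCommonPoint, iInf_eq_if]
  refine .iInf fun ℓ ↦ .ite ?_ measurable_const measurable_const
  have hpoint (c : ℕ) (i : ℕ → ℕ ⊕ ℕ) :
      MeasurableSet {w : ℕ ⊕ ℕ → ℕ | ∃ m, c + ∑ k ∈ Finset.range m, w (i k) = ℓ} := by
    rw [Set.ofPred_exists]
    exact .iUnion fun m ↦ measurableSet_eq_fun (by fun_prop) measurable_const
  exact (MeasurableSet.const (1 ≤ ℓ)).inter ((hpoint a .inl).inter (hpoint b .inr))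

lemma firstCommonPoint_mul_le {Ω : Type*} {W : ℕ ⊕ ℕ → Ω → ℕ} {w : ℕ ⊕ ℕ → ℕ} {h : ℕ}
    (hh : 0 < h) {ω : Ω} (hW : ∀ i, W i ω = h * w i) (a b : ℕ) :
    (firstCommonPoint (fun k ↦ W (.inl k)) (fun k ↦ W (.inr k)) (h * a) (h * b) ω : ℝ≥0∞) ≤
      h * extFirstCommonPoint w a b := by
  have hh' : (h : ℝ≥0∞) ≠ 0 := by exact_mod_cast hh.ne'
  rw [extFirstCommonPoint, ENNReal.mul_iInf_of_ne hh' (by finiteness)]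
  refine le_iInf fun ℓ ↦ ?_
  rw [ENNReal.mul_iInf_of_ne hh' (by finiteness)]
  refine le_iInf fun ⟨hℓ, ⟨m, hm⟩, ⟨n, hn⟩⟩ ↦ ?_
  have hle : firstCommonPoint (fun k ↦ W (.inl k)) (fun k ↦ W (.inr k)) (h * a) (h * b) ω
      ≤ h * ℓ :=
    Nat.sInf_le ⟨Nat.mul_pos hh hℓ,
      ⟨m, by simp only [renewal, hW, ← Finset.mul_sum, ← mul_add, hm]⟩,
      ⟨n, by simp only [renewal, hW, ← Finset.mul_sum, ← mul_add, hn]⟩⟩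
  exact_mod_cast hle

end FirstCommonPoint

section Resampling

lemma indepFun_eval_precomp {ι κ Ω β : Type*} [MeasurableSpace Ω] [MeasurableSpace β]
    {P : Measure Ω} [IsProbabilityMeasure P] {X : ι → Ω → β} (hX : ∀ i, Measurable (X i))
    (hindep : iIndepFun X P) {i₀ : ι} {σ : κ → ι} (hσ : ∀ k, σ k ≠ i₀) :
    IndepFun (X i₀) (fun ω k ↦ X (σ k) ω) P := by
  classical
  refine IndepFun.indepFun_process (hX i₀) (fun k ↦ hX (σ k)) fun I ↦ ?_
  have hdisj : Disjoint ({i₀} : Finset ι) (I.image σ) := by simp [hσ]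
  have hfst : Measurable fun x : ({i₀} : Finset ι) → β ↦ x ⟨i₀, Finset.mem_singleton_self i₀⟩ :=
    measurable_pi_apply _
  have hsnd : Measurable fun (x : I.image σ → β) (k : I) ↦
      x ⟨σ k, Finset.mem_image_of_mem σ k.2⟩ := by fun_prop
  exact (hindep.indepFun_finset {i₀} (I.image σ) hdisj hX).comp hfst hsnd

lemma lintegral_infinitePi_eval_precomp {ι β : Type*} [MeasurableSpace β] {ν : Measure β}
    [IsProbabilityMeasure ν] {i₀ : ι} {σ : ι → ι} (hσ : Function.Injective σ)
    (hi₀ : ∀ k, σ k ≠ i₀) {F : β × (ι → β) → ℝ≥0∞} (hF : Measurable F) :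
    ∫⁻ w, F (w i₀, fun k ↦ w (σ k)) ∂Measure.infinitePi (fun _ : ι ↦ ν) =
      ∫⁻ y, ∫⁻ w, F (y, w) ∂Measure.infinitePi (fun _ : ι ↦ ν) ∂ν := by
  set P := Measure.infinitePi fun _ : ι ↦ ν
  have hindep : IndepFun (fun w : ι → β ↦ w i₀) (fun w k ↦ w (σ k)) P :=
    indepFun_eval_precomp (X := fun i (w : ι → β) ↦ w i) (by fun_prop)
      (iIndepFun_infinitePi (X := fun _ ↦ id) (fun _ ↦ measurable_id)) hi₀
  have hlaw : P.map (fun w k ↦ w (σ k)) = P :=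
    Measure.map_infinitePi_infinitePi_of_inj hσ
  have hjoint : P.map (fun w ↦ (w i₀, fun k ↦ w (σ k))) = ν.prod P := by
    rw [hindep.map_prod_eq_prod_map_map (measurable_pi_apply i₀).aemeasurable
      (Measurable.aemeasurable (by fun_prop)), hlaw,
      Measure.infinitePi_map_eval]
  rw [← lintegral_map hF (by fun_prop), hjoint, lintegral_prod _ hF.aemeasurable]

end Resampling

section CanonicalSpace

variable {ν : Measure ℕ} [IsProbabilityMeasure ν]

lemma isBisubharmonic_lintegral_extFirstCommonPoint {φ : ℝ≥0∞ → ℝ≥0∞} (hφ : Monotone φ) :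
    IsBisubharmonic ν fun a b ↦
      ∫⁻ w, φ (extFirstCommonPoint w a b) ∂Measure.infinitePi fun _ ↦ ν where
  left a b :=
    calc ∫⁻ w, φ (extFirstCommonPoint w a b) ∂Measure.infinitePi (fun _ ↦ ν)
        ≤ ∫⁻ w, φ (extFirstCommonPoint (fun i ↦ w (i.map Nat.succ id)) (a + w (.inl 0)) b)
          ∂Measure.infinitePi (fun _ ↦ ν) :=
        lintegral_mono fun w ↦ hφ (extFirstCommonPoint_le_shift_left w a b)
      _ = _ := lintegral_infinitePi_eval_precomp
        (F := fun p : ℕ × (ℕ ⊕ ℕ → ℕ) ↦ φ (extFirstCommonPoint p.2 (a + p.1) b))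
        (Sum.map_injective.2 ⟨Nat.succ_injective, Function.injective_id⟩) (by simp)
        (measurable_from_prod_countable_right fun y ↦
          hφ.measurable.comp (measurable_extFirstCommonPoint (a + y) b))
  right a b :=
    calc ∫⁻ w, φ (extFirstCommonPoint w a b) ∂Measure.infinitePi (fun _ ↦ ν)
        ≤ ∫⁻ w, φ (extFirstCommonPoint (fun i ↦ w (i.map id Nat.succ)) a (b + w (.inr 0)))
          ∂Measure.infinitePi (fun _ ↦ ν) :=
        lintegral_mono fun w ↦ hφ (extFirstCommonPoint_le_shift_right w a b)
      _ = _ := lintegral_infinitePi_eval_precomp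
        (F := fun p : ℕ × (ℕ ⊕ ℕ → ℕ) ↦ φ (extFirstCommonPoint p.2 a (b + p.1)))
        (Sum.map_injective.2 ⟨Function.injective_id, Nat.succ_injective⟩) (by simp)
        (measurable_from_prod_countable_right fun y ↦
          hφ.measurable.comp (measurable_extFirstCommonPoint a (b + y)))

theorem exists_forall_lintegral_extFirstCommonPoint_rpow_le (hν : ν {0} = 0)
    (hgcd : ∀ q : ℕ, (∀ᵐ y ∂ν, q ∣ y) → q = 1) {r : ℝ} (hr : 1 ≤ r)
    (hmom : ∫⁻ y, (y : ℝ≥0∞) ^ (r + 1) ∂ν ≠ ⊤) :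
    ∃ K ≠ (⊤ : ℝ≥0∞), ∀ a b,
      ∫⁻ w, extFirstCommonPoint w a b ^ r ∂Measure.infinitePi (fun _ ↦ ν) ≤
        (↑(max a b) + K) ^ r := by
  obtain ⟨K, hK, hbound⟩ := exists_forall_isBisubharmonic_le_rpow hν hgcd hr hmom
  have hr0 : 0 ≤ r := by linarith
  refine ⟨K, hK, fun a b ↦ lintegral_le_of_forall_lintegral_min_natCast_le
    ((measurable_extFirstCommonPoint a b).pow_const r) fun N ↦ ?_⟩
  refine hbound _ (isBisubharmonic_lintegral_extFirstCommonPoint (φ := fun x ↦ min (x ^ r) N)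
    ((ENNReal.monotone_rpow_of_nonneg hr0).min monotone_const))
    (fun a ha ↦ ?_) ⟨N, by simp, fun a b ↦ ?_⟩ a b
  · refine (lintegral_mono fun w ↦ (min_le_left _ _).trans (ENNReal.rpow_le_rpow
      (extFirstCommonPoint_self_le w ha) hr0)).trans_eq ?_
    rw [lintegral_const, measure_univ, mul_one]
  · refine (lintegral_mono fun w ↦ min_le_right _ _).trans_eq ?_
    rw [lintegral_const, measure_univ, mul_one]

end CanonicalSpace

section Lattice

variable {Ω : Type*} [MeasurableSpace Ω] {μ : Measure Ω}

lemma map_fun_eq_infinitePi_of_identDistrib {ι β : Type*} [MeasurableSpace β]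
    [IsProbabilityMeasure μ] {X : ι → Ω → β} (hX : ∀ i, Measurable (X i)) (hindep : iIndepFun X μ)
    (i₀ : ι) (hident : ∀ i, IdentDistrib (X i) (X i₀) μ μ) :
    μ.map (fun ω i ↦ X i ω) = Measure.infinitePi fun _ ↦ μ.map (X i₀) := by
  simp only [iIndepFun.map_fun_eq_infinitePi_map hX hindep, (hident _).map_eq]

variable {Y : Ω → ℕ} {h : ℕ}

lemma map_div_singleton_zero (hY : Measurable Y) (hpos : ∀ ω, 0 < Y ω) (hdvd : ∀ᵐ ω ∂μ, h ∣ Y ω) :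
    μ.map (fun ω ↦ Y ω / h) {0} = 0 := by
  rw [Measure.map_apply (hY.div_const h) (measurableSet_singleton 0)]
  refine measure_eq_zero_iff_ae_notMem.2 ?_
  filter_upwards [hdvd] with ω hω h0
  exact (hpos ω).ne' (Nat.eq_zero_of_dvd_of_div_eq_zero hω h0)

lemma eq_one_of_ae_dvd_div [IsProbabilityMeasure μ] (hY : Measurable Y) (hpos : ∀ ω, 0 < Y ω)
    (hdvd : ∀ᵐ ω ∂μ, h ∣ Y ω)
    (hmax : ∀ h', 0 < h' → (∀ᵐ ω ∂μ, h' ∣ Y ω) → h' ≤ h) (q : ℕ)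
    (hq : ∀ᵐ y ∂μ.map (fun ω ↦ Y ω / h), q ∣ y) : q = 1 := by
  have hmul : ∀ᵐ ω ∂μ, h * q ∣ Y ω := by
    filter_upwards [hdvd, ae_of_ae_map (hY.div_const h).aemeasurable hq] with ω hω hqω
    exact Nat.mul_dvd_of_dvd_div hω hqω
  obtain ⟨ω, hω⟩ := hmul.exists
  have hhq : 0 < h * q := Nat.pos_of_dvd_of_pos hω (hpos ω)
  have hle : h * q ≤ h * 1 := by simpa using hmax _ hhq hmul
  exact le_antisymm (Nat.le_of_mul_le_mul_left hle (Nat.pos_of_mul_pos_right hhq))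
    (Nat.pos_of_mul_pos_left hhq)

lemma lintegral_rpow_map_div_le (hY : Measurable Y) {p : ℝ} (hp : 0 ≤ p) :
    ∫⁻ y, (y : ℝ≥0∞) ^ p ∂μ.map (fun ω ↦ Y ω / h) ≤ ∫⁻ ω, (Y ω : ℝ≥0∞) ^ p ∂μ := by
  rw [lintegral_map (measurable_of_countable _) (hY.div_const h)]
  refine lintegral_mono fun ω ↦ ENNReal.rpow_le_rpow ?_ hp
  exact_mod_cast Nat.div_le_self (Y ω) h

lemma ae_forall_eq_mul_div {ι : Type*} {X : ι → Ω → ℕ} {i₀ : ι}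
    (hident : ∀ i, IdentDistrib (X i) (X i₀) μ μ) [Countable ι] (hdvd : ∀ᵐ ω ∂μ, h ∣ X i₀ ω) :
    ∀ᵐ ω ∂μ, ∀ i, X i ω = h * (X i ω / h) :=
  ae_all_iff.2 fun i ↦ ((hident i).symm.ae_snd (p := (h ∣ ·)) .of_discrete hdvd).mono
    fun _ hω ↦ (Nat.mul_div_cancel' hω).symm

lemma lintegral_firstCommonPoint_mul_rpow_le {W V : ℕ ⊕ ℕ → Ω → ℕ} (hV : ∀ i, Measurable (V i))
    (hh : 0 < h) (hWV : ∀ᵐ ω ∂μ, ∀ i, W i ω = h * V i ω) {r : ℝ} (hr : 0 ≤ r) {a b : ℕ}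
    {K : ℝ≥0∞} (hbound : ∫⁻ w, extFirstCommonPoint w a b ^ r ∂μ.map (fun ω i ↦ V i ω) ≤
      (↑(max a b) + K) ^ r) :
    ∫⁻ ω, ENNReal.ofReal ((firstCommonPoint (fun k ↦ W (.inl k)) (fun k ↦ W (.inr k))
      (h * a) (h * b) ω : ℝ) ^ r) ∂μ ≤ (↑(max (h * a) (h * b)) + h * K) ^ r := by
  have hmeas : Measurable fun w ↦ extFirstCommonPoint w a b ^ r :=
    (measurable_extFirstCommonPoint a b).pow_const r
  calc ∫⁻ ω, ENNReal.ofReal ((firstCommonPoint (fun k ↦ W (.inl k)) (fun k ↦ W (.inr k))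
        (h * a) (h * b) ω : ℝ) ^ r) ∂μ
      ≤ ∫⁻ ω, h ^ r * extFirstCommonPoint (fun i ↦ V i ω) a b ^ r ∂μ := by
        refine lintegral_mono_ae (hWV.mono fun ω hω ↦ ?_)
        rw [← ENNReal.ofReal_rpow_of_nonneg (Nat.cast_nonneg _) hr, ENNReal.ofReal_natCast,
          ← ENNReal.mul_rpow_of_nonneg _ _ hr]
        exact ENNReal.rpow_le_rpow (firstCommonPoint_mul_le hh hω a b) hr
    _ = h ^ r * ∫⁻ w, extFirstCommonPoint w a b ^ r ∂μ.map (fun ω i ↦ V i ω) := by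
      rw [← lintegral_const_mul _ hmeas, lintegral_map (hmeas.const_mul _) (by fun_prop)]
    _ ≤ h ^ r * (↑(max a b) + K) ^ r := by gcongr
    _ = (↑(max (h * a) (h * b)) + h * K) ^ r := by
      rw [← ENNReal.mul_rpow_of_nonneg _ _ hr, mul_add, Nat.mul_max_mul_left, Nat.cast_mul]

lemma exists_forall_max_add_rpow_le_ofReal {r : ℝ} (hr : 1 ≤ r) {K : ℝ≥0∞} (hK : K ≠ ⊤) :
    ∃ C : ℝ, ∀ a b : ℕ,
      (↑(max a b) + K) ^ r ≤ ENNReal.ofReal (C * (1 + (a : ℝ) ^ r + (b : ℝ) ^ r)) := by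
  have hr0 : 0 < r := by linarith
  set C : ℝ≥0∞ := 2 ^ (r - 1) * (1 + K ^ r) with hC
  have hCtop : C ≠ ⊤ := by finiteness
  refine ⟨C.toReal, fun a b ↦ ?_⟩
  have hmax : ((max a b : ℕ) : ℝ≥0∞) ^ r ≤ (a : ℝ≥0∞) ^ r + (b : ℝ≥0∞) ^ r := by
    rcases max_choice a b with hab | hab <;> rw [hab]
    exacts [le_self_add, le_add_self]
  have hcast : ENNReal.ofReal (C.toReal * (1 + (a : ℝ) ^ r + (b : ℝ) ^ r)) =
      C * (1 + ((a : ℝ≥0∞) ^ r + (b : ℝ≥0∞) ^ r)) := by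
    rw [ENNReal.ofReal_mul ENNReal.toReal_nonneg, ENNReal.ofReal_toReal hCtop, add_assoc,
      ENNReal.ofReal_add zero_le_one (by positivity),
      ENNReal.ofReal_add (by positivity) (by positivity), ENNReal.ofReal_one]
    simp only [← ENNReal.ofReal_rpow_of_nonneg (Nat.cast_nonneg _) hr0.le, ENNReal.ofReal_natCast]
  calc (↑(max a b) + K) ^ r
      ≤ 2 ^ (r - 1) * (((max a b : ℕ) : ℝ≥0∞) ^ r + K ^ r) :=
        ENNReal.rpow_add_le_mul_rpow_add_rpow _ _ hr
    _ ≤ 2 ^ (r - 1) * ((1 + K ^ r) * (1 + ((a : ℝ≥0∞) ^ r + (b : ℝ≥0∞) ^ r))) := by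
      grw [hmax]
      gcongr
      rw [add_mul, one_mul]
      exact add_le_add le_add_self (le_mul_of_one_le_right zero_le le_self_add)
    _ = _ := by rw [hcast, hC, mul_assoc]

end Lattice

/-- **Lemma A.3** (a renewal-process bound).  Let `{Y_i}` be i.i.d. positive integer-valued
random variables and `{Ỹ_j}` an independent copy; let `h` be the largest positive integer such
that the common distribution is supported on `hℕ*`.  Let `1 ≤ r < ∞` and assume
`E(Y^{r+1}) < ∞`.  Then there is a finite constant `C` such that for all `i, j ∈ hℕ`,
`E(L_{i,j}^r) ≤ C (1 + i^r + j^r)`. -/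
theorem renewal_first_common_point_moment
    {Ω : Type*} [MeasurableSpace Ω] (μ : Measure Ω) [IsProbabilityMeasure μ]
    (W : ℕ ⊕ ℕ → Ω → ℕ)
    (hmeas : ∀ k, Measurable (W k))
    (hindep : iIndepFun W μ)
    (hident : ∀ k, IdentDistrib (W k) (W (Sum.inl 0)) μ μ)
    (hpos : ∀ k ω, 0 < W k ω)
    (h : ℕ) (hh : 0 < h)
    (hdvd : ∀ᵐ ω ∂μ, h ∣ W (Sum.inl 0) ω)
    (hmax : ∀ h' : ℕ, 0 < h' → (∀ᵐ ω ∂μ, h' ∣ W (Sum.inl 0) ω) → h' ≤ h)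
    (r : ℝ) (hr : 1 ≤ r)
    (hmom : (∫⁻ ω, ((W (Sum.inl 0) ω : ℝ≥0∞)) ^ (r + 1) ∂μ) < ⊤) :
    ∃ C : ℝ, ∀ a b : ℕ,
      (∫⁻ ω, ENNReal.ofReal
          ((firstCommonPoint (fun k => W (Sum.inl k)) (fun k => W (Sum.inr k))
              (h * a) (h * b) ω : ℝ) ^ r) ∂μ) ≤
        ENNReal.ofReal (C * (1 + ((h * a : ℕ) : ℝ) ^ r + ((h * b : ℕ) : ℝ) ^ r)) := by
  set V : ℕ ⊕ ℕ → Ω → ℕ := fun i ω ↦ W i ω / h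
  set ν := μ.map (V (.inl 0))
  have hr0 : 0 ≤ r := by linarith
  have hV (i) : Measurable (V i) := (hmeas i).div_const h
  have : IsProbabilityMeasure ν := Measure.isProbabilityMeasure_map (hV _).aemeasurable
  have hlaw : μ.map (fun ω i ↦ V i ω) = Measure.infinitePi fun _ ↦ ν :=
    map_fun_eq_infinitePi_of_identDistrib hV
      (hindep.comp (fun _ ↦ (· / h)) fun _ ↦ measurable_of_countable _) (.inl 0)
      fun i ↦ (hident i).comp (measurable_of_countable (· / h))
  have hmomν : ∫⁻ y, (y : ℝ≥0∞) ^ (r + 1) ∂ν ≠ ⊤ :=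
    ((lintegral_rpow_map_div_le (hmeas _) (by linarith)).trans_lt hmom).ne
  obtain ⟨K, hK, hbound⟩ := exists_forall_lintegral_extFirstCommonPoint_rpow_le
    (map_div_singleton_zero (hmeas _) (hpos _) hdvd)
    (eq_one_of_ae_dvd_div (hmeas _) (hpos _) hdvd hmax) hr hmomν
  obtain ⟨C, hC⟩ := exists_forall_max_add_rpow_le_ofReal hr
    (ENNReal.mul_ne_top (ENNReal.natCast_ne_top h) hK)
  exact ⟨C, fun a b ↦ (lintegral_firstCommonPoint_mul_rpow_le hV hh
    (ae_forall_eq_mul_div hident hdvd) hr0 (hlaw ▸ hbound a b)).trans (hC (h * a) (h * b))⟩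

end
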